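/- arXiv:2510.01522 — 3 statements merged into one kernel-verified Lean document; each statement's English description precedes it below -/
import Mathlib

section
/- Let ε ∈ (0, 1/2), h > 0, and δ > 0 with δ ≥ 2σ‖W‖/n. Suppose ẑ ∈ ℂ_1^n satisfies ẑ = F_1(ẑ) and ℓ_1(ẑ, z*) ≤ ε². For each k = 0, 1, …, ⌈nε/h⌉ set s_k = n − kh ∈ ℝ and let z_{s_k} ∈ ℂ_{≤1}^n be the fixed point of G(·, s_k, 2δn). Then (1/n)·Σ_{j=1}^n 1{|[Yẑ]_j| < δn} ≤ 9·Σ_{k=0}^{⌈nε/h⌉} ( (1/n)·Σ_{j=1}^n 1{|z*_j s_k + σ[W z_{s_k}]_j| < 4δn} ) + (9h²/(δ²n²))·1{h > δ√n}. -/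
open scoped Classical
open Matrix

noncomputable section

namespace PhaseSync

/-- Euclidean norm of a complex vector. -/
def enorm {k : ℕ} (v : Fin k → ℂ) : ℝ := Real.sqrt (∑ i, ‖v i‖ ^ 2)

/-- Frobenius norm of a complex matrix. -/
def fnorm {k l : ℕ} (A : Matrix (Fin k) (Fin l) ℂ) : ℝ :=
  Real.sqrt (∑ i, ∑ j, ‖A i j‖ ^ 2)

/-- L2 operator norm of a square complex matrix. -/
def opNorm {k : ℕ} (A : Matrix (Fin k) (Fin k) ℂ) : ℝ :=
  ‖Matrix.toEuclideanCLM (𝕜 := ℂ) (n := Fin k) A‖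

/-- Indicator function of a proposition. -/
def ind (P : Prop) : ℝ := if P then 1 else 0

/-- The loss ℓ_m(V, z) = min_{a : ‖a‖=1} ‖V - a zᴴ‖_F² / n. -/
def lossM {k l : ℕ} (V : Matrix (Fin k) (Fin l) ℂ) (z : Fin l → ℂ) : ℝ :=
  sInf { r : ℝ | ∃ a : Fin k → ℂ, enorm a = 1 ∧
    r = fnorm (V - Matrix.vecMulVec a (star z)) ^ 2 / l }

/-- The loss ℓ_1(z', z) = min_{|a|=1} ‖z' - a z‖² / n. -/
def loss1 {l : ℕ} (z' z : Fin l → ℂ) : ℝ :=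
  sInf { r : ℝ | ∃ a : ℂ, ‖a‖ = 1 ∧ r = enorm (z' - a • z) ^ 2 / l }

/-- The mapping F₁: entrywise normalization of Y z. -/
def F1 {l : ℕ} (Y : Matrix (Fin l) (Fin l) ℂ) (z : Fin l → ℂ) : Fin l → ℂ :=
  fun j => if Y.mulVec z j ≠ 0 then Y.mulVec z j / (‖Y.mulVec z j‖ : ℂ) else z j

/-- jth column of a matrix. -/
def col {k l : ℕ} (A : Matrix (Fin k) (Fin l) ℂ) (j : Fin l) : Fin k → ℂ := fun i => A i j

/-- The mapping F_m: columnwise normalization of V Yᴴ. -/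
def Fm {k l : ℕ} (Y : Matrix (Fin l) (Fin l) ℂ) (V : Matrix (Fin k) (Fin l) ℂ) :
    Matrix (Fin k) (Fin l) ℂ :=
  Matrix.of fun i j =>
    if col (V * Yᴴ) j ≠ 0 then (V * Yᴴ) i j / ((enorm (col (V * Yᴴ) j) : ℝ) : ℂ) else V i j

/-- g_t(x) = x / max(|x|, t). -/
def gfun (t : ℝ) (x : ℂ) : ℂ := x / ((max ‖x‖ t : ℝ) : ℂ)

/-- The mapping G(z, s, t), coordinatewise g_t(z*_j s + σ [W z]_j). -/
def G {l : ℕ} (zstar : Fin l → ℂ) (σ : ℝ) (W : Matrix (Fin l) (Fin l) ℂ)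
    (z : Fin l → ℂ) (s : ℂ) (t : ℝ) : Fin l → ℂ :=
  fun j => gfun t (zstar j * s + (σ : ℂ) * W.mulVec z j)

/-- The mapping F₁'(z, s), entrywise normalization of z* s + σ W z. -/
def F1' {l : ℕ} (zstar : Fin l → ℂ) (σ : ℝ) (W : Matrix (Fin l) (Fin l) ℂ)
    (z : Fin l → ℂ) (s : ℂ) : Fin l → ℂ :=
  fun j =>
    if zstar j * s + (σ : ℂ) * W.mulVec z j ≠ 0 then
      (zstar j * s + (σ : ℂ) * W.mulVec z j) /
        ((‖zstar j * s + (σ : ℂ) * W.mulVec z j‖ : ℝ) : ℂ)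
    else z j

/-- W with jth row and column zeroed out. -/
def Wminus {l : ℕ} (W : Matrix (Fin l) (Fin l) ℂ) (j : Fin l) : Matrix (Fin l) (Fin l) ℂ :=
  Matrix.of fun k i => if k = j ∨ i = j then 0 else W k i

/-!
Let `q = ⟨z*, ẑ⟩`. After multiplying `ẑ` by a phase, `q` becomes the real number `s = |q|`, and `ẑ`
consists of the directions of the entries of `x = z* s + σ W ẑ = Y ẑ`. The loss bound puts `s` in
`[n - n ε, n]`, so some grid point `r = n - k h` lies within `h` of `s`.

Put `c = δ n`, let `v` be the fixed point at `r` and `y = z* r + σ W v`. Write `X = ‖x - y‖²`,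
`D = ‖ẑ - v‖²` and let `T` be the number of `j` with `|y_j| < 4 c`. Linearity and `2 σ ‖W‖ ≤ c` give
`X ≤ 2 n h² + c² D / 2`; since directions are stable under perturbation of long vectors,
`D ≤ 4 T + X / (4 c²)`. Eliminating `D` bounds `X / c²` by a multiple of `T + h² / (δ² n)`. An entry
with `|x_j| < c` and `|y_j| ≥ 4 c` contributes at least `9 c²` to `X`, so there are few of them;
when `h² / (δ² n) ≤ 1`, integrality of the counts removes the additive term.
-/

open WithLp (toLp)

section Direction

variable {E : Type*} [NormedAddCommGroup E] [NormedSpace ℝ E] {r : ℝ} {x y u v : E}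

/-- `v` plays the role of the direction `y / ‖y‖` once `y` has length at least `r`; below that
length it is only required to lie in the unit ball. Both normalizations `F1` (with `r = 0`) and
`gfun t` (with `r ≥ t`) produce such vectors. -/
def IsDirectionAbove (r : ℝ) (y v : E) : Prop :=
  ‖v‖ ≤ 1 ∧ (r ≤ ‖y‖ → y = ‖y‖ • v)

lemma norm_mul_norm_sub_le_of_eq_norm_smul (hu : ‖u‖ ≤ 1) (hx : x = ‖x‖ • u)
    (hy : y = ‖y‖ • v) : ‖y‖ * ‖u - v‖ ≤ 2 * ‖x - y‖ := by
  have hsplit : ‖y‖ • (u - v) = (‖y‖ - ‖x‖) • u + (x - y) := by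
    rw [smul_sub, ← hy, sub_smul, ← hx]
    abel
  have hlength : ‖(‖y‖ - ‖x‖) • u‖ ≤ ‖x - y‖ :=
    calc ‖(‖y‖ - ‖x‖) • u‖ = |‖y‖ - ‖x‖| * ‖u‖ := by rw [norm_smul, Real.norm_eq_abs]
      _ ≤ |‖y‖ - ‖x‖| := mul_le_of_le_one_right (abs_nonneg _) hu
      _ ≤ ‖x - y‖ := by rw [norm_sub_rev]; exact abs_norm_sub_norm_le y x
  calc ‖y‖ * ‖u - v‖ = ‖(‖y‖ - ‖x‖) • u + (x - y)‖ := by rw [← hsplit, norm_smul, norm_norm]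
    _ ≤ ‖(‖y‖ - ‖x‖) • u‖ + ‖x - y‖ := norm_add_le _ _
    _ ≤ 2 * ‖x - y‖ := by linarith

lemma IsDirectionAbove.norm_sub_sq_le (hr : 0 < r) (hu : IsDirectionAbove 0 x u)
    (hv : IsDirectionAbove r y v) :
    ‖u - v‖ ^ 2 ≤ 4 * ind (‖y‖ < r) + 4 * ‖x - y‖ ^ 2 / r ^ 2 := by
  by_cases hyr : ‖y‖ < r
  · have hdiam : ‖u - v‖ ≤ 2 := by linarith [norm_sub_le u v, hu.1, hv.1]
    have hsq : ‖u - v‖ ^ 2 ≤ 2 ^ 2 := by gcongr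
    have hrest : 0 ≤ 4 * ‖x - y‖ ^ 2 / r ^ 2 := by positivity
    rw [ind, if_pos hyr]
    linarith
  · have hlong : r * ‖u - v‖ ≤ 2 * ‖x - y‖ :=
      calc r * ‖u - v‖ ≤ ‖y‖ * ‖u - v‖ := by gcongr; exact not_lt.mp hyr
        _ ≤ 2 * ‖x - y‖ := norm_mul_norm_sub_le_of_eq_norm_smul hu.1 (hu.2 (norm_nonneg x))
            (hv.2 (not_lt.mp hyr))
    rw [ind, if_neg hyr, mul_zero, zero_add, le_div_iff₀ (by positivity)]
    calc ‖u - v‖ ^ 2 * r ^ 2 = (r * ‖u - v‖) ^ 2 := by ring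
      _ ≤ (2 * ‖x - y‖) ^ 2 := by gcongr
      _ = 4 * ‖x - y‖ ^ 2 := by ring

end Direction

lemma IsDirectionAbove.mul_left {r : ℝ} {y v a : ℂ} (hv : IsDirectionAbove r y v)
    (ha : ‖a‖ = 1) : IsDirectionAbove r (a * y) (a * v) := by
  have hnorm (w : ℂ) : ‖a * w‖ = ‖w‖ := by rw [norm_mul, ha, one_mul]
  refine ⟨(hnorm v).trans_le hv.1, fun hr => ?_⟩
  rw [hnorm] at hr ⊢
  rw [← mul_smul_comm, ← hv.2 hr]

lemma isDirectionAbove_gfun {t r : ℝ} (htr : t ≤ r) (y : ℂ) :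
    IsDirectionAbove r y (gfun t y) := by
  constructor
  · rw [gfun, norm_div, Complex.norm_real]
    exact div_le_one_of_le₀ ((le_max_left _ t).trans (Real.le_norm_self _)) (norm_nonneg _)
  · intro hr
    rcases eq_or_ne y 0 with rfl | hy
    · simp
    · rw [gfun, max_eq_left (htr.trans hr), Complex.real_smul]
      exact (mul_div_cancel₀ y (by simpa using hy)).symm

lemma isDirectionAbove_of_eq_F1 {l : ℕ} {Y : Matrix (Fin l) (Fin l) ℂ} {z : Fin l → ℂ}
    (hz : z = F1 Y z) {j : Fin l} (hzj : ‖z j‖ ≤ 1) : IsDirectionAbove 0 ((Y *ᵥ z) j) (z j) := by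
  refine ⟨hzj, fun _ => ?_⟩
  by_cases hYz : (Y *ᵥ z) j = 0
  · simp [hYz]
  · have hzj_eq : z j = (Y *ᵥ z) j / (‖(Y *ᵥ z) j‖ : ℂ) := by
      conv_lhs => rw [hz, F1, if_pos hYz]
    rw [hzj_eq, Complex.real_smul]
    exact (mul_div_cancel₀ _ (by simpa using hYz)).symm

section Counting

variable {ι E : Type*} [Fintype ι] [NormedAddCommGroup E]

lemma ind_nonneg (P : Prop) : 0 ≤ ind P := by
  unfold ind
  split_ifs <;> norm_num

/-- The number of entries of `x` of norm less than `r`. -/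
def countBelow (x : ι → E) (r : ℝ) : ℕ := Finset.card {j | ‖x j‖ < r}

lemma sum_ind_norm_lt (x : ι → E) (r : ℝ) : ∑ j, ind (‖x j‖ < r) = countBelow x r := by
  simp [ind, countBelow]

lemma countBelow_smul {a : ℂ} (ha : ‖a‖ = 1) (x : ι → ℂ) (r : ℝ) :
    countBelow (a • x) r = countBelow x r := by
  simp [countBelow, ha]

lemma countBelow_le_add_sum_norm_sub_sq {c r : ℝ} (hcr : c < r) (x y : ι → E) :
    (countBelow x c : ℝ) ≤ countBelow y r + (∑ j, ‖x j - y j‖ ^ 2) / (r - c) ^ 2 := by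
  rw [← sum_ind_norm_lt, ← sum_ind_norm_lt, Finset.sum_div, ← Finset.sum_add_distrib]
  refine Finset.sum_le_sum fun j _ => ?_
  have hgap : 0 < r - c := sub_pos.mpr hcr
  have hsq : 0 ≤ ‖x j - y j‖ ^ 2 / (r - c) ^ 2 := by positivity
  by_cases hx : ‖x j‖ < c
  · by_cases hy : ‖y j‖ < r
    · simpa [ind, hx, hy] using hsq
    · have hfar : r - c ≤ ‖x j - y j‖ := by
        linarith [norm_sub_norm_le (y j) (x j), norm_sub_rev (x j) (y j)]
      have hone : 1 ≤ ‖x j - y j‖ ^ 2 / (r - c) ^ 2 := by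
        rw [one_le_div (pow_pos hgap 2)]
        exact pow_le_pow_left₀ hgap.le hfar 2
      simpa [ind, hx, hy] using hone
  · rw [ind, if_neg hx]
    exact add_nonneg (ind_nonneg _) hsq

variable [NormedSpace ℝ E] {x y u v : ι → E}

lemma sum_norm_sub_sq_le_of_isDirectionAbove {r : ℝ} (hr : 0 < r)
    (hu : ∀ j, IsDirectionAbove 0 (x j) (u j)) (hv : ∀ j, IsDirectionAbove r (y j) (v j)) :
    ∑ j, ‖u j - v j‖ ^ 2 ≤ 4 * countBelow y r + 4 * (∑ j, ‖x j - y j‖ ^ 2) / r ^ 2 := by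
  rw [← sum_ind_norm_lt, Finset.mul_sum, Finset.mul_sum, Finset.sum_div,
    ← Finset.sum_add_distrib]
  exact Finset.sum_le_sum fun j _ => (hu j).norm_sub_sq_le hr (hv j)

lemma countBelow_le_of_sum_norm_sub_sq_le {b c : ℝ} (hc : 0 < c)
    (hu : ∀ j, IsDirectionAbove 0 (x j) (u j)) (hv : ∀ j, IsDirectionAbove (4 * c) (y j) (v j))
    (hxy : ∑ j, ‖x j - y j‖ ^ 2 ≤ 2 * (b * c ^ 2) + c ^ 2 / 2 * ∑ j, ‖u j - v j‖ ^ 2) :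
    (countBelow x c : ℝ) ≤ 4 / 3 * countBelow y (4 * c) + b / 3 := by
  have hdir := sum_norm_sub_sq_le_of_isDirectionAbove (by positivity : 0 < 4 * c) hu hv
  have hcount := countBelow_le_add_sum_norm_sub_sq (by linarith : c < 4 * c) x y
  set X := ∑ j, ‖x j - y j‖ ^ 2
  set D := ∑ j, ‖u j - v j‖ ^ 2
  obtain ⟨Z, hZ⟩ : ∃ Z, X = Z * c ^ 2 := ⟨X / c ^ 2, by field_simp⟩
  have hD : D ≤ 4 * countBelow y (4 * c) + Z / 4 := by
    refine hdir.trans_eq ?_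
    rw [hZ]
    field_simp
  have hx : (countBelow x c : ℝ) ≤ countBelow y (4 * c) + Z / 9 := by
    refine hcount.trans_eq ?_
    rw [hZ]
    field_simp
    ring
  have hZD : Z ≤ 2 * b + D / 2 := by
    refine le_of_mul_le_mul_right ?_ (by positivity : 0 < c ^ 2)
    linarith
  have hZ0 : 0 ≤ Z := by
    rw [← mul_nonneg_iff_of_pos_right (by positivity : 0 < c ^ 2), ← hZ]
    positivity
  linarith

lemma natCast_le_two_mul_add_mul_ind {k m : ℕ} {b : ℝ} (hkm : (k : ℝ) ≤ 4 / 3 * m + b / 3)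
    {P : Prop} (hb : 0 ≤ b) (hP : ¬P → b ≤ 1) : (k : ℝ) ≤ 2 * m + b * ind P := by
  by_cases hp : P
  · rw [ind, if_pos hp]
    linarith [m.cast_nonneg (α := ℝ)]
  · rw [ind, if_neg hp, mul_zero, add_zero]
    have hb1 := hP hp
    rcases m.eq_zero_or_pos with rfl | hm
    · have hk : k < 1 := by
        rw [← Nat.cast_lt (α := ℝ)]
        push_cast at hkm ⊢
        linarith
      simp [Nat.lt_one_iff.mp hk]
    · have hm1 : (1 : ℝ) ≤ m := by exact_mod_cast hm
      linarith

end Counting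

section Euclidean

variable {n : ℕ}

lemma enorm_eq_norm_toLp (z : Fin n → ℂ) : enorm z = ‖toLp 2 z‖ :=
  (EuclideanSpace.norm_eq _).symm

lemma enorm_sq (z : Fin n → ℂ) : enorm z ^ 2 = ∑ j, ‖z j‖ ^ 2 := by
  rw [enorm_eq_norm_toLp, EuclideanSpace.norm_sq_eq]

lemma enorm_add_le (z w : Fin n → ℂ) : enorm (z + w) ≤ enorm z + enorm w := by
  simp only [enorm_eq_norm_toLp, WithLp.toLp_add]
  exact norm_add_le _ _

lemma enorm_smul (a : ℂ) (z : Fin n → ℂ) : enorm (a • z) = ‖a‖ * enorm z := by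
  simp only [enorm_eq_norm_toLp, WithLp.toLp_smul, norm_smul]

lemma enorm_of_norm_eq_one {z : Fin n → ℂ} (hz : ∀ j, ‖z j‖ = 1) : enorm z = √n := by
  simp [enorm, hz]

lemma enorm_sub_sq (z w : Fin n → ℂ) :
    enorm (z - w) ^ 2 = enorm z ^ 2 - 2 * (star w ⬝ᵥ z).re + enorm w ^ 2 := by
  simp only [enorm_eq_norm_toLp, WithLp.toLp_sub]
  rw [norm_sub_sq (𝕜 := ℂ), ← inner_conj_symm, RCLike.conj_re,
    EuclideanSpace.inner_toLp_toLp, dotProduct_comm]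
  rfl

lemma enorm_mulVec_le (W : Matrix (Fin n) (Fin n) ℂ) (z : Fin n → ℂ) :
    enorm (W *ᵥ z) ≤ opNorm W * enorm z := by
  rw [enorm_eq_norm_toLp, enorm_eq_norm_toLp, ← Matrix.toEuclideanCLM_toLp]
  exact ContinuousLinearMap.le_opNorm _ _

variable {z w : Fin n → ℂ}

lemma norm_star_dotProduct_le (hz : ∀ j, ‖z j‖ = 1) (hw : ∀ j, ‖w j‖ = 1) :
    ‖star z ⬝ᵥ w‖ ≤ n := by
  refine (norm_sum_le _ _).trans ?_
  simp [hz, hw]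

lemma two_sub_norm_star_dotProduct_le_loss1 (hn : 0 < n) (hz : ∀ j, ‖z j‖ = 1)
    (hw : ∀ j, ‖w j‖ = 1) : 2 - 2 * ‖star z ⬝ᵥ w‖ / n ≤ loss1 w z := by
  have hn' : (0 : ℝ) < n := Nat.cast_pos.mpr hn
  refine le_csInf ⟨_, 1, norm_one, rfl⟩ ?_
  rintro _ ⟨a, ha, rfl⟩
  have hre : (star (a • z) ⬝ᵥ w).re ≤ ‖star z ⬝ᵥ w‖ := by
    refine (Complex.re_le_norm _).trans_eq ?_
    rw [star_smul, smul_dotProduct, norm_smul, norm_star, ha, one_mul]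
  rw [enorm_sub_sq, enorm_smul, ha, one_mul, enorm_of_norm_eq_one hz, enorm_of_norm_eq_one hw,
    Real.sq_sqrt hn'.le, le_div_iff₀ hn', sub_mul, div_mul_cancel₀ _ hn'.ne']
  linarith

lemma natCast_sub_norm_star_dotProduct_le (hn : 0 < n) (hz : ∀ j, ‖z j‖ = 1)
    (hw : ∀ j, ‖w j‖ = 1) {ε : ℝ} (hε : 0 ≤ ε) (hloss : loss1 w z ≤ ε ^ 2) :
    n - ‖star z ⬝ᵥ w‖ ≤ n * ε := by
  have hn' : (0 : ℝ) < n := Nat.cast_pos.mpr hn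
  rcases le_total 1 ε with hε1 | hε1
  · linarith [le_mul_of_one_le_right hn'.le hε1, norm_nonneg (star z ⬝ᵥ w)]
  · have hcorr : 2 - ε ^ 2 ≤ 2 * ‖star z ⬝ᵥ w‖ / n := by
      linarith [two_sub_norm_star_dotProduct_le_loss1 hn hz hw]
    have hεsq : n * ε ^ 2 ≤ n * ε := by
      gcongr
      exact pow_le_of_le_one hε hε1 two_ne_zero
    rw [le_div_iff₀ hn'] at hcorr
    linarith [mul_nonneg hn'.le hε]

end Euclidean

section LocalField

variable {n : ℕ} {zstar : Fin n → ℂ} {σ : ℝ} {W : Matrix (Fin n) (Fin n) ℂ}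

/-- The vector `z* s + σ W z` whose entries `G(z, s, t)` truncates; `Y z` is the case
`s = ⟨z*, z⟩`. -/
def localField (zstar : Fin n → ℂ) (σ : ℝ) (W : Matrix (Fin n) (Fin n) ℂ) (s : ℂ)
    (z : Fin n → ℂ) : Fin n → ℂ :=
  fun j => zstar j * s + (σ : ℂ) * (W *ᵥ z) j

lemma localField_eq (s : ℂ) (z : Fin n → ℂ) :
    localField zstar σ W s z = s • zstar + (σ : ℂ) • W *ᵥ z := by
  ext j
  simp [localField, mul_comm]

lemma mulVec_eq_localField (z : Fin n → ℂ) :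
    (vecMulVec zstar (star zstar) + (σ : ℂ) • W) *ᵥ z =
      localField zstar σ W (star zstar ⬝ᵥ z) z := by
  rw [localField_eq, add_mulVec, smul_mulVec, vecMulVec_mulVec, op_smul_eq_smul]

lemma smul_localField (a s : ℂ) (z : Fin n → ℂ) :
    a • localField zstar σ W s z = localField zstar σ W (a * s) (a • z) := by
  rw [localField_eq, localField_eq, smul_add, smul_smul, mulVec_smul, smul_comm a (σ : ℂ)]

lemma localField_sub_localField (s r : ℂ) (u v : Fin n → ℂ) :
    localField zstar σ W s u - localField zstar σ W r v =
      localField zstar σ W (s - r) (u - v) := by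
  simp only [localField_eq, mulVec_sub, sub_smul, smul_sub]
  abel

lemma enorm_localField_le (hzstar : ∀ j, ‖zstar j‖ = 1) (s : ℂ) (z : Fin n → ℂ) :
    enorm (localField zstar σ W s z) ≤ ‖s‖ * √n + |σ| * (opNorm W * enorm z) := by
  rw [localField_eq]
  refine (enorm_add_le _ _).trans ?_
  rw [enorm_smul, enorm_smul, enorm_of_norm_eq_one hzstar, Complex.norm_real, Real.norm_eq_abs]
  gcongr
  exact enorm_mulVec_le W z

lemma enorm_localField_sub_sq_le (hzstar : ∀ j, ‖zstar j‖ = 1) {c : ℝ}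
    (hσW : 2 * |σ| * opNorm W ≤ c) (s r : ℂ) (u v : Fin n → ℂ) :
    enorm (localField zstar σ W s u - localField zstar σ W r v) ^ 2 ≤
      2 * (n * ‖s - r‖ ^ 2) + c ^ 2 / 2 * enorm (u - v) ^ 2 := by
  have henorm (z : Fin n → ℂ) : 0 ≤ enorm z := Real.sqrt_nonneg _
  rw [localField_sub_localField]
  calc enorm (localField zstar σ W (s - r) (u - v)) ^ 2
      ≤ (‖s - r‖ * √n + c / 2 * enorm (u - v)) ^ 2 := by
        refine pow_le_pow_left₀ (henorm _) ((enorm_localField_le hzstar _ _).trans ?_) 2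
        rw [← mul_assoc]
        gcongr
        · exact henorm _
        · linarith
    _ ≤ 2 * ((‖s - r‖ * √n) ^ 2 + (c / 2 * enorm (u - v)) ^ 2) := add_sq_le
    _ = 2 * (n * ‖s - r‖ ^ 2) + c ^ 2 / 2 * enorm (u - v) ^ 2 := by
        rw [mul_pow, Real.sq_sqrt n.cast_nonneg]
        ring

lemma countBelow_localField_le (hzstar : ∀ j, ‖zstar j‖ = 1) {c : ℝ} (hc : 0 < c)
    (hσW : 2 * |σ| * opNorm W ≤ c) {s r : ℂ} {u v : Fin n → ℂ}
    (hu : ∀ j, IsDirectionAbove 0 (localField zstar σ W s u j) (u j))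
    (hv : ∀ j, IsDirectionAbove (4 * c) (localField zstar σ W r v j) (v j)) :
    (countBelow (localField zstar σ W s u) c : ℝ) ≤
      4 / 3 * countBelow (localField zstar σ W r v) (4 * c) + n * ‖s - r‖ ^ 2 / c ^ 2 / 3 := by
  refine countBelow_le_of_sum_norm_sub_sq_le hc hu hv ?_
  rw [div_mul_cancel₀ _ (by positivity)]
  simpa only [enorm_sq, Pi.sub_apply] using enorm_localField_sub_sq_le hzstar hσW s r u v

lemma countBelow_mulVec_le_of_eq_F1 (hzstar : ∀ j, ‖zstar j‖ = 1) {c : ℝ} (hc : 0 < c)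
    (hσW : 2 * |σ| * opNorm W ≤ c) {Y : Matrix (Fin n) (Fin n) ℂ}
    (hY : Y = vecMulVec zstar (star zstar) + (σ : ℂ) • W) {z : Fin n → ℂ}
    (hz1 : ∀ j, ‖z j‖ ≤ 1) (hz : z = F1 Y z) {r : ℝ} {v : Fin n → ℂ}
    (hv : v = G zstar σ W v r (2 * c)) :
    (countBelow (Y *ᵥ z) c : ℝ) ≤ 4 / 3 * countBelow (localField zstar σ W r v) (4 * c) +
      n * (‖star zstar ⬝ᵥ z‖ - r) ^ 2 / c ^ 2 / 3 := by
  obtain ⟨a, ha, haq⟩ := Complex.exists_norm_eq_mul_self (star zstar ⬝ᵥ z)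
  have hrot : a • Y *ᵥ z = localField zstar σ W ‖star zstar ⬝ᵥ z‖ (a • z) := by
    rw [hY, mulVec_eq_localField, smul_localField, haq]
  have hdir_z : ∀ j, IsDirectionAbove 0
      (localField zstar σ W ‖star zstar ⬝ᵥ z‖ (a • z) j) ((a • z) j) := fun j => by
    rw [← hrot]
    exact (isDirectionAbove_of_eq_F1 hz (hz1 j)).mul_left ha
  have hdir_v : ∀ j, IsDirectionAbove (4 * c) (localField zstar σ W r v j) (v j) := fun j => by
    nth_rw 2 [hv]
    exact isDirectionAbove_gfun (by linarith) _
  have hcount := countBelow_localField_le hzstar hc hσW hdir_z hdir_v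
  rwa [← hrot, countBelow_smul ha, ← Complex.ofReal_sub, Complex.norm_real, Real.norm_eq_abs,
    sq_abs] at hcount

end LocalField

lemma exists_natCast_sq_sub_mul_le {h d b : ℝ} (hh : 0 < h) (hd : 0 ≤ d) (hdb : d ≤ b) :
    ∃ k ≤ ⌈b / h⌉₊, (d - k * h) ^ 2 ≤ h ^ 2 := by
  refine ⟨⌊d / h⌋₊, (Nat.floor_le_floor (by gcongr)).trans (Nat.floor_le_ceil _), ?_⟩
  have hlower : ⌊d / h⌋₊ * h ≤ d := (le_div_iff₀ hh).mp (Nat.floor_le (by positivity))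
  have hupper : d < (⌊d / h⌋₊ + 1) * h := (div_lt_iff₀ hh).mp (Nat.lt_floor_add_one _)
  exact pow_le_pow_left₀ (by linarith) (by linarith) 2

lemma exists_countBelow_mulVec_le_of_eq_F1 {n : ℕ} (hn : 0 < n) {zstar : Fin n → ℂ}
    (hzstar : ∀ j, ‖zstar j‖ = 1) {σ : ℝ} {W Y : Matrix (Fin n) (Fin n) ℂ}
    (hY : Y = vecMulVec zstar (star zstar) + (σ : ℂ) • W) {ε : ℝ} (hε : 0 ≤ ε) {h : ℝ}
    (hh : 0 < h) {δ : ℝ} (hδ0 : 0 < δ) (hσW : 2 * |σ| * opNorm W ≤ δ * n) {z : Fin n → ℂ}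
    (hz1 : ∀ j, ‖z j‖ = 1) (hz : z = F1 Y z) (hloss : loss1 z zstar ≤ ε ^ 2)
    {v : ℕ → Fin n → ℂ}
    (hv : ∀ k ≤ ⌈n * ε / h⌉₊, v k = G zstar σ W (v k) (n - k * h : ℝ) (2 * (δ * n))) :
    ∃ k ≤ ⌈n * ε / h⌉₊, (countBelow (Y *ᵥ z) (δ * n) : ℝ) ≤
      2 * countBelow (localField zstar σ W (n - k * h : ℝ) (v k)) (4 * (δ * n)) +
        h ^ 2 / (δ ^ 2 * n) * ind (h > δ * √n) := by
  have hn' : (0 : ℝ) < n := Nat.cast_pos.mpr hn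
  obtain ⟨k, hk, hkh⟩ := exists_natCast_sq_sub_mul_le hh
    (sub_nonneg.mpr (norm_star_dotProduct_le hzstar hz1))
    (natCast_sub_norm_star_dotProduct_le hn hzstar hz1 hε hloss)
  have hcompare := countBelow_mulVec_le_of_eq_F1 hzstar (by positivity) hσW hY
    (fun j => (hz1 j).le) hz (hv k hk)
  have hgrid : n * (‖star zstar ⬝ᵥ z‖ - (n - k * h)) ^ 2 / (δ * n) ^ 2 ≤ h ^ 2 / (δ ^ 2 * n) :=
    calc n * (‖star zstar ⬝ᵥ z‖ - (n - k * h)) ^ 2 / (δ * n) ^ 2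
        = (n - ‖star zstar ⬝ᵥ z‖ - k * h) ^ 2 / (δ ^ 2 * n) := by field_simp; ring
      _ ≤ h ^ 2 / (δ ^ 2 * n) := by gcongr
  have hsmall (hstep : ¬h > δ * √n) : h ^ 2 / (δ ^ 2 * n) ≤ 1 := by
    rw [div_le_one (by positivity)]
    calc h ^ 2 ≤ (δ * √n) ^ 2 := pow_le_pow_left₀ hh.le (not_lt.mp hstep) 2
      _ = δ ^ 2 * n := by rw [mul_pow, Real.sq_sqrt hn'.le]
  exact ⟨k, hk, natCast_le_two_mul_add_mul_ind (by linarith) (by positivity) hsmall⟩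

theorem stmt3_general {n : ℕ} (hn : 1 ≤ n)
    (zstar : Fin n → ℂ) (hzstar : ∀ j, ‖zstar j‖ = 1)
    (σ : ℝ) (W : Matrix (Fin n) (Fin n) ℂ)
    (Y : Matrix (Fin n) (Fin n) ℂ)
    (hY : Y = Matrix.vecMulVec zstar (star zstar) + (σ : ℂ) • W)
    (ε : ℝ) (hε : 0 ≤ ε) (h : ℝ) (hh : 0 < h)
    (δ : ℝ) (hδ0 : 0 < δ) (hδ : 2 * |σ| * opNorm W / n ≤ δ)
    (zhat : Fin n → ℂ) (hzhat1 : ∀ j, ‖zhat j‖ = 1)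
    (hzhat2 : zhat = F1 Y zhat) (hzhat3 : loss1 zhat zstar ≤ ε ^ 2)
    (zfam : ℕ → Fin n → ℂ)
    (hzfam : ∀ k ≤ Nat.ceil ((n : ℝ) * ε / h),
      zfam k = G zstar σ W (zfam k) (((n : ℝ) - (k : ℝ) * h : ℝ) : ℂ) (2 * δ * n)) :
    (1 / (n : ℝ)) * ∑ j : Fin n, ind (‖Y.mulVec zhat j‖ < δ * n) ≤
      9 * (∑ k ∈ Finset.range (Nat.ceil ((n : ℝ) * ε / h) + 1),
        (1 / (n : ℝ)) * ∑ j : Fin n,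
          ind (‖zstar j * (((n : ℝ) - (k : ℝ) * h : ℝ) : ℂ) +
            (σ : ℂ) * W.mulVec (zfam k) j‖ < 4 * δ * n)) +
      (9 * h ^ 2 / (δ ^ 2 * (n : ℝ) ^ 2)) * ind (h > δ * Real.sqrt n) := by
  have hn' : (0 : ℝ) < n := Nat.cast_pos.mpr hn
  simp only [mul_assoc _ δ] at hzfam ⊢
  obtain ⟨k, hk, hcount⟩ := exists_countBelow_mulVec_le_of_eq_F1 hn hzstar hY hε hh hδ0
    ((div_le_iff₀ hn').mp hδ) hzhat1 hzhat2 hzhat3 hzfam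
  let y (k : ℕ) : Fin n → ℂ := localField zstar σ W ((n : ℝ) - (k : ℝ) * h : ℝ) (zfam k)
  have hterm : (1 / n : ℝ) * countBelow (y k) (4 * (δ * n)) ≤
      ∑ k ∈ Finset.range (⌈n * ε / h⌉₊ + 1), (1 / n : ℝ) * countBelow (y k) (4 * (δ * n)) :=
    Finset.single_le_sum (f := fun k => (1 / n : ℝ) * countBelow (y k) (4 * (δ * n)))
      (fun _ _ => by positivity) (Finset.mem_range_succ_iff.mpr hk)
  have hind := ind_nonneg (h > δ * √n)
  simp only [sum_ind_norm_lt]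
  calc (1 / n : ℝ) * countBelow (Y *ᵥ zhat) (δ * n)
      ≤ 1 / n * (2 * countBelow (y k) (4 * (δ * n)) +
          h ^ 2 / (δ ^ 2 * n) * ind (h > δ * √n)) := by gcongr
    _ = 2 * (1 / n * countBelow (y k) (4 * (δ * n))) +
          1 * h ^ 2 / (δ ^ 2 * n ^ 2) * ind (h > δ * √n) := by field_simp
    _ ≤ 9 * (1 / n * countBelow (y k) (4 * (δ * n))) +
          9 * h ^ 2 / (δ ^ 2 * n ^ 2) * ind (h > δ * √n) := by gcongr <;> norm_num
    _ ≤ _ := by gcongr; exact hterm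

theorem stmt3 {n : ℕ} (hn : 1 ≤ n)
    (zstar : Fin n → ℂ) (hzstar : ∀ j, ‖zstar j‖ = 1)
    (σ : ℝ) (hσ : 0 < σ) (W : Matrix (Fin n) (Fin n) ℂ) (hW : W.IsHermitian)
    (Y : Matrix (Fin n) (Fin n) ℂ)
    (hY : Y = Matrix.vecMulVec zstar (star zstar) + (σ : ℂ) • W)
    (ε : ℝ) (hε : 0 < ε ∧ ε < 1 / 2) (h : ℝ) (hh : 0 < h)
    (δ : ℝ) (hδ0 : 0 < δ) (hδ : 2 * σ * opNorm W / n ≤ δ)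
    (zhat : Fin n → ℂ) (hzhat1 : ∀ j, ‖zhat j‖ = 1)
    (hzhat2 : zhat = F1 Y zhat) (hzhat3 : loss1 zhat zstar ≤ ε ^ 2)
    (zfam : ℕ → Fin n → ℂ)
    (hzfam : ∀ k ≤ Nat.ceil ((n : ℝ) * ε / h),
      (∀ i, ‖zfam k i‖ ≤ 1) ∧
      zfam k = G zstar σ W (zfam k) (((n : ℝ) - (k : ℝ) * h : ℝ) : ℂ) (2 * δ * n)) :
    (1 / (n : ℝ)) * ∑ j : Fin n, ind (‖Y.mulVec zhat j‖ < δ * n) ≤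
      9 * (∑ k ∈ Finset.range (Nat.ceil ((n : ℝ) * ε / h) + 1),
        (1 / (n : ℝ)) * ∑ j : Fin n,
          ind (‖zstar j * (((n : ℝ) - (k : ℝ) * h : ℝ) : ℂ) +
            (σ : ℂ) * W.mulVec (zfam k) j‖ < 4 * δ * n)) +
      (9 * h ^ 2 / (δ ^ 2 * (n : ℝ) ^ 2)) * ind (h > δ * Real.sqrt n) := by
  exact stmt3_general hn zstar hzstar σ W Y hY ε hε.1.le h hh δ hδ0 (by rwa [abs_of_pos hσ]) zhat
    hzhat1 hzhat2 hzhat3 zfam fun k hk => (hzfam k hk).2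

end PhaseSync
end
end

section
/- Let m ∈ ℕ with m ≥ 2 and ε ∈ (0, 1/2). For any z ∈ ℂ_1^n such that ℓ_1(z, z*) ≤ ε² and any V ∈ 𝒱_m such that ℓ_m(V, z*) ≤ ε², one has ℓ_m(V Yᴴ, Y z) ≤ n²·(6ε + σ‖W‖/n)²·ℓ_m(V, z). -/
open scoped Classical
open Matrix

noncomputable section

namespace PhaseSync

/-!
Let `a` be the normalization of `V z`, so that the residual `D = V - a zᴴ` realises `ℓ_m(V, z)`.
Then `V Yᴴ - a (Y z)ᴴ = D Yᴴ = (D z*) (z*)ᴴ + σ D Wᴴ`, and everything rests on `D z*` being of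
second order. Optimality of `a`, together with `‖V‖_F = ‖z‖`, makes `D z` a multiple of `a` of
length exactly `‖D‖_F² / 2`, while `D (z - b z*)` has length at most `‖D‖_F ‖z - b z*‖` for the
best phase `b`. Since `‖D‖_F ≤ 2 ε √n` by the triangle inequality for the losses, this gives
`‖D z*‖ ≤ 2 ε √n ‖D‖_F`.
-/

section Norms

variable {k l : ℕ}

lemma enorm_eq_norm (v : Fin k → ℂ) : enorm v = ‖WithLp.toLp 2 v‖ := by
  rw [EuclideanSpace.norm_eq, enorm]

lemma enorm_nonneg (v : Fin k → ℂ) : 0 ≤ enorm v := Real.sqrt_nonneg _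

lemma enorm_sq_s5 (v : Fin k → ℂ) : enorm v ^ 2 = ∑ i, ‖v i‖ ^ 2 := Real.sq_sqrt (by positivity)

lemma enorm_eq_zero {v : Fin k → ℂ} : enorm v = 0 ↔ v = 0 := by
  rw [enorm_eq_norm, norm_eq_zero, WithLp.toLp_eq_zero]

lemma enorm_star (v : Fin k → ℂ) : enorm (star v) = enorm v := by
  simp [enorm]

lemma enorm_smul_s5 (c : ℂ) (v : Fin k → ℂ) : enorm (c • v) = ‖c‖ * enorm v := by
  simp only [enorm_eq_norm, WithLp.toLp_smul, norm_smul]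

lemma enorm_sub_le (u v : Fin k → ℂ) : enorm (u - v) ≤ enorm u + enorm v := by
  simpa only [enorm_eq_norm, WithLp.toLp_sub] using norm_sub_le (WithLp.toLp 2 u) (WithLp.toLp 2 v)

lemma continuous_enorm : Continuous (enorm : (Fin k → ℂ) → ℝ) := by
  unfold enorm
  fun_prop

lemma exists_enorm_eq_one [NeZero k] : ∃ a : Fin k → ℂ, enorm a = 1 :=
  ⟨Pi.single 0 1, by simp [enorm_eq_norm]⟩

lemma enorm_eq_sqrt_of_norm_eq_one {v : Fin k → ℂ} (hv : ∀ i, ‖v i‖ = 1) : enorm v = √k := by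
  simp [enorm, hv]

lemma star_dotProduct_self (v : Fin k → ℂ) : star v ⬝ᵥ v = (enorm v : ℂ) ^ 2 := by
  rw [dotProduct_comm, ← EuclideanSpace.inner_toLp_toLp, inner_self_eq_norm_sq_to_K, enorm_eq_norm]
  rfl

lemma re_star_dotProduct_le (u v : Fin k → ℂ) : (star u ⬝ᵥ v).re ≤ enorm u * enorm v := by
  rw [dotProduct_comm, ← EuclideanSpace.inner_toLp_toLp, enorm_eq_norm, enorm_eq_norm]
  exact re_inner_le_norm (𝕜 := ℂ) _ _

lemma fnorm_nonneg (A : Matrix (Fin k) (Fin l) ℂ) : 0 ≤ fnorm A := Real.sqrt_nonneg _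

lemma fnorm_sq (A : Matrix (Fin k) (Fin l) ℂ) : fnorm A ^ 2 = ∑ i, ∑ j, ‖A i j‖ ^ 2 :=
  Real.sq_sqrt (by positivity)

lemma fnorm_sq_eq_sum_enorm_col (A : Matrix (Fin k) (Fin l) ℂ) :
    fnorm A ^ 2 = ∑ j, enorm (col A j) ^ 2 := by
  simp only [fnorm_sq, enorm_sq_s5, col]
  exact Finset.sum_comm

lemma fnorm_eq_sqrt_of_enorm_col_eq_one {A : Matrix (Fin k) (Fin l) ℂ}
    (hA : ∀ j, enorm (col A j) = 1) : fnorm A = √l := by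
  rw [← Real.sqrt_sq (fnorm_nonneg A), fnorm_sq_eq_sum_enorm_col]
  simp [hA]

lemma fnorm_vecMulVec (a : Fin k → ℂ) (b : Fin l → ℂ) :
    fnorm (vecMulVec a b) = enorm a * enorm b := by
  rw [← sq_eq_sq₀ (fnorm_nonneg _) (mul_nonneg (enorm_nonneg _) (enorm_nonneg _)), mul_pow,
    fnorm_sq, enorm_sq_s5, enorm_sq_s5, Finset.sum_mul_sum]
  simp only [vecMulVec_apply, norm_mul, mul_pow]

section Frobenius

attribute [local instance] Matrix.frobeniusNormedAddCommGroup Matrix.frobeniusNormedSpace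

lemma fnorm_eq_norm (A : Matrix (Fin k) (Fin l) ℂ) : fnorm A = ‖A‖ := by
  simp [frobenius_norm_def, fnorm, Real.sqrt_eq_rpow]

lemma fnorm_add_le (A B : Matrix (Fin k) (Fin l) ℂ) : fnorm (A + B) ≤ fnorm A + fnorm B := by
  simpa only [fnorm_eq_norm] using norm_add_le A B

lemma fnorm_sub_le (A B : Matrix (Fin k) (Fin l) ℂ) : fnorm (A - B) ≤ fnorm A + fnorm B := by
  simpa only [fnorm_eq_norm] using norm_sub_le A B

lemma fnorm_smul (c : ℂ) (A : Matrix (Fin k) (Fin l) ℂ) : fnorm (c • A) = ‖c‖ * fnorm A := by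
  simp only [fnorm_eq_norm, norm_smul]

lemma fnorm_conjTranspose (A : Matrix (Fin k) (Fin l) ℂ) : fnorm Aᴴ = fnorm A := by
  simp only [fnorm_eq_norm, frobenius_norm_conjTranspose]

lemma enorm_mulVec_le_s5 (A : Matrix (Fin k) (Fin l) ℂ) (v : Fin l → ℂ) :
    enorm (A *ᵥ v) ≤ fnorm A * enorm v := by
  simp only [enorm_eq_norm, fnorm_eq_norm, ← frobenius_norm_replicateCol (ι := Unit),
    replicateCol_mulVec]
  exact frobenius_norm_mul _ _

end Frobenius

lemma opNorm_nonneg (A : Matrix (Fin k) (Fin k) ℂ) : 0 ≤ opNorm A := norm_nonneg _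

lemma enorm_mulVec_le_opNorm (A : Matrix (Fin k) (Fin k) ℂ) (v : Fin k → ℂ) :
    enorm (A *ᵥ v) ≤ opNorm A * enorm v := by
  rw [enorm_eq_norm, enorm_eq_norm, ← toEuclideanCLM_toLp]
  exact (toEuclideanCLM (𝕜 := ℂ) A).le_opNorm _

lemma fnorm_mul_le_opNorm (A : Matrix (Fin k) (Fin k) ℂ) (B : Matrix (Fin k) (Fin l) ℂ) :
    fnorm (A * B) ≤ opNorm A * fnorm B := by
  refine (sq_le_sq₀ (fnorm_nonneg _) (mul_nonneg (opNorm_nonneg A) (fnorm_nonneg B))).mp ?_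
  rw [mul_pow, fnorm_sq_eq_sum_enorm_col, fnorm_sq_eq_sum_enorm_col, Finset.mul_sum]
  refine Finset.sum_le_sum fun j _ ↦ ?_
  rw [← mul_pow]
  exact pow_le_pow_left₀ (enorm_nonneg _) (enorm_mulVec_le_opNorm A (col B j)) 2

lemma fnorm_mul_conjTranspose_le_opNorm (A : Matrix (Fin k) (Fin k) ℂ)
    (B : Matrix (Fin l) (Fin k) ℂ) : fnorm (B * Aᴴ) ≤ opNorm A * fnorm B := by
  simpa only [← fnorm_conjTranspose (B * Aᴴ), conjTranspose_mul, conjTranspose_conjTranspose,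
    fnorm_conjTranspose B] using fnorm_mul_le_opNorm A Bᴴ

end Norms

section Losses

variable {k l : ℕ}

lemma fnorm_sub_vecMulVec_sq (V : Matrix (Fin k) (Fin l) ℂ) (a : Fin k → ℂ) (z : Fin l → ℂ) :
    fnorm (V - vecMulVec a (star z)) ^ 2 =
      fnorm V ^ 2 + enorm a ^ 2 * enorm z ^ 2 - 2 * (star a ⬝ᵥ V *ᵥ z).re := by
  have norm_entry_sq (i : Fin k) (j : Fin l) :
      ‖(V - vecMulVec a (star z)) i j‖ ^ 2 =
        ‖V i j‖ ^ 2 + ‖a i‖ ^ 2 * ‖z j‖ ^ 2 - 2 * (star (a i) * (V i j * z j)).re := by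
    rw [Matrix.sub_apply, vecMulVec_apply, Complex.sq_norm, Complex.normSq_sub]
    simp only [Complex.sq_norm, Pi.star_apply, RCLike.star_def, Complex.normSq_conj,
      map_mul, Complex.conj_conj]
    ring_nf
  rw [enorm_sq_s5, enorm_sq_s5, Finset.sum_mul_sum]
  simp only [fnorm_sq, norm_entry_sq, Finset.sum_sub_distrib, Finset.sum_add_distrib, dotProduct,
    mulVec, Pi.star_apply, Finset.mul_sum, Complex.re_sum]

lemma lossM_le (V : Matrix (Fin k) (Fin l) ℂ) (z : Fin l → ℂ) {a : Fin k → ℂ}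
    (ha : enorm a = 1) : lossM V z ≤ fnorm (V - vecMulVec a (star z)) ^ 2 / l := by
  refine csInf_le ⟨0, ?_⟩ ⟨a, ha, rfl⟩
  rintro _ ⟨a', -, rfl⟩
  positivity

lemma exists_loss1_eq (z' z : Fin l → ℂ) :
    ∃ b : ℂ, ‖b‖ = 1 ∧ loss1 z' z = enorm (z' - b • z) ^ 2 / l := by
  have continuous_dist : Continuous fun b : ℂ ↦ enorm (z' - b • z) ^ 2 / l :=
    ((continuous_enorm.comp (by fun_prop)).pow 2).div_const _
  obtain ⟨b, hb, hmin⟩ := (isCompact_sphere (0 : ℂ) 1).exists_sInf_image_eq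
    ⟨1, by simp⟩ continuous_dist.continuousOn
  refine ⟨b, by simpa using hb, hmin ▸ ?_⟩
  simp only [loss1, Set.image, mem_sphere_zero_iff_norm, eq_comm]

/-- `a` is a unit vector with `v = ‖v‖ a`, i.e. the normalization of `v`; any unit vector
qualifies when `v = 0`. The normalizations of `V z` are the minimizers in `lossM V z`. -/
def IsDirection (a v : Fin k → ℂ) : Prop :=
  enorm a = 1 ∧ v = (enorm v : ℂ) • a

lemma exists_isDirection [NeZero k] (v : Fin k → ℂ) : ∃ a, IsDirection a v := by
  rcases eq_or_ne v 0 with rfl | hv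
  · obtain ⟨a, ha⟩ := exists_enorm_eq_one (k := k)
    exact ⟨a, ha, by simp [enorm_eq_zero.mpr]⟩
  · have hv' : enorm v ≠ 0 := enorm_eq_zero.not.mpr hv
    refine ⟨(enorm v : ℂ)⁻¹ • v, ?_, ?_⟩
    · rw [enorm_smul_s5, norm_inv, Complex.norm_of_nonneg (enorm_nonneg v), inv_mul_cancel₀ hv']
    · rw [smul_inv_smul₀ (Complex.ofReal_ne_zero.mpr hv')]

lemma IsDirection.star_dotProduct {a v : Fin k → ℂ} (h : IsDirection a v) :
    star a ⬝ᵥ v = enorm v := by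
  conv_lhs => rw [h.2]
  simp [star_dotProduct_self, h.1]

lemma IsDirection.fnorm_sub_sq {V : Matrix (Fin k) (Fin l) ℂ} {z : Fin l → ℂ}
    {a : Fin k → ℂ} (h : IsDirection a (V *ᵥ z)) :
    fnorm (V - vecMulVec a (star z)) ^ 2 =
      fnorm V ^ 2 + enorm z ^ 2 - 2 * enorm (V *ᵥ z) := by
  rw [fnorm_sub_vecMulVec_sq, h.star_dotProduct, h.1, Complex.ofReal_re]
  ring

lemma IsDirection.lossM_eq {V : Matrix (Fin k) (Fin l) ℂ} {z : Fin l → ℂ}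
    {a : Fin k → ℂ} (h : IsDirection a (V *ᵥ z)) :
    lossM V z = fnorm (V - vecMulVec a (star z)) ^ 2 / l := by
  refine (lossM_le V z h.1).antisymm (le_csInf ⟨_, a, h.1, rfl⟩ ?_)
  rintro _ ⟨a', ha', rfl⟩
  gcongr ?_ / _
  rw [h.fnorm_sub_sq, fnorm_sub_vecMulVec_sq, ha']
  have cauchy_schwarz := re_star_dotProduct_le a' (V *ᵥ z)
  rw [ha'] at cauchy_schwarz
  linarith

lemma lossM_nonneg (V : Matrix (Fin k) (Fin l) ℂ) (z : Fin l → ℂ) : 0 ≤ lossM V z := by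
  refine Real.sInf_nonneg ?_
  rintro _ ⟨a, -, rfl⟩
  positivity

lemma IsDirection.fnorm_sub_eq [NeZero l] {V : Matrix (Fin k) (Fin l) ℂ}
    {z : Fin l → ℂ} {a : Fin k → ℂ} (h : IsDirection a (V *ᵥ z)) :
    fnorm (V - vecMulVec a (star z)) = √l * √(lossM V z) := by
  have hl : (l : ℝ) ≠ 0 := NeZero.ne _
  rw [← Real.sqrt_mul l.cast_nonneg, h.lossM_eq, mul_div_cancel₀ _ hl,
    Real.sqrt_sq (fnorm_nonneg _)]

lemma sqrt_lossM_le_add [NeZero k] (V : Matrix (Fin k) (Fin l) ℂ) (z z' : Fin l → ℂ) :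
    √(lossM V z) ≤ √(lossM V z') + √(loss1 z z') := by
  obtain ⟨a, ha⟩ := exists_isDirection (V *ᵥ z')
  obtain ⟨b, hb, hloss1⟩ := exists_loss1_eq z z'
  have hba : enorm (b • a) = 1 := by rw [enorm_smul_s5, hb, ha.1, one_mul]
  have split : V - vecMulVec (b • a) (star z) =
      (V - vecMulVec a (star z')) - vecMulVec (b • a) (star (z - b • z')) := by
    have hbb : star b * b = 1 := by simp [Complex.conj_mul', hb]
    rw [star_sub, star_smul, vecMulVec_sub, vecMulVec_smul, smul_vecMulVec, smul_vecMulVec,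
      smul_smul, hbb, one_smul, sub_sub_sub_cancel_right]
  calc √(lossM V z)
      ≤ √(fnorm (V - vecMulVec (b • a) (star z)) ^ 2 / l) := Real.sqrt_le_sqrt (lossM_le V z hba)
    _ = fnorm (V - vecMulVec (b • a) (star z)) / √l := by
      rw [Real.sqrt_div (sq_nonneg _), Real.sqrt_sq (fnorm_nonneg _)]
    _ ≤ (fnorm (V - vecMulVec a (star z')) + enorm (z - b • z')) / √l := by
      gcongr
      rw [split]
      refine (fnorm_sub_le _ _).trans_eq ?_
      rw [fnorm_vecMulVec, hba, enorm_star, one_mul]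
    _ = √(lossM V z') + √(loss1 z z') := by
      rw [ha.lossM_eq, hloss1, Real.sqrt_div (sq_nonneg _), Real.sqrt_div (sq_nonneg _),
        Real.sqrt_sq (fnorm_nonneg _), Real.sqrt_sq (enorm_nonneg _), add_div]

end Losses

section Contraction

variable {k l : ℕ} {V : Matrix (Fin k) (Fin l) ℂ} {z : Fin l → ℂ} {a : Fin k → ℂ}

lemma IsDirection.enorm_sub_mulVec (h : IsDirection a (V *ᵥ z))
    (hVz : fnorm V = enorm z) :
    enorm ((V - vecMulVec a (star z)) *ᵥ z) = fnorm (V - vecMulVec a (star z)) ^ 2 / 2 := by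
  have residual_sq := h.fnorm_sub_sq
  rw [hVz] at residual_sq
  have mulVec_eq : (V - vecMulVec a (star z)) *ᵥ z =
      ((enorm (V *ᵥ z) - enorm z ^ 2 : ℝ) : ℂ) • a := by
    rw [sub_mulVec, vecMulVec_mulVec, star_dotProduct_self, op_smul_eq_smul]
    nth_rw 1 [h.2]
    push_cast
    rw [sub_smul]
  have hle : enorm (V *ᵥ z) - enorm z ^ 2 ≤ 0 := by
    linarith [sq_nonneg (fnorm (V - vecMulVec a (star z)))]
  rw [mulVec_eq, enorm_smul_s5, h.1, Complex.norm_real, Real.norm_of_nonpos hle]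
  linarith

lemma IsDirection.enorm_sub_mulVec_le [NeZero l] (h : IsDirection a (V *ᵥ z))
    (hVz : fnorm V = enorm z) (z' : Fin l → ℂ) :
    enorm ((V - vecMulVec a (star z)) *ᵥ z') ≤
      fnorm (V - vecMulVec a (star z)) * (√l * (√(lossM V z) / 2 + √(loss1 z z'))) := by
  obtain ⟨b, hb, hloss1⟩ := exists_loss1_eq z z'
  have dist_eq : enorm (z - b • z') = √l * √(loss1 z z') := by
    rw [← Real.sqrt_mul l.cast_nonneg, hloss1, mul_div_cancel₀ _ (NeZero.ne _),
      Real.sqrt_sq (enorm_nonneg _)]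
  have residual_eq := h.fnorm_sub_eq
  have residual_mulVec := h.enorm_sub_mulVec hVz
  set D := V - vecMulVec a (star z)
  calc enorm (D *ᵥ z')
      = enorm (D *ᵥ z - D *ᵥ (z - b • z')) := by
        rw [← mulVec_sub, sub_sub_cancel, mulVec_smul, enorm_smul_s5, hb, one_mul]
    _ ≤ fnorm D ^ 2 / 2 + fnorm D * enorm (z - b • z') :=
        (enorm_sub_le _ _).trans (add_le_add residual_mulVec.le (enorm_mulVec_le_s5 _ _))
    _ = fnorm D * (√l * (√(lossM V z) / 2 + √(loss1 z z'))) := by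
        rw [dist_eq, sq]
        nth_rw 2 [residual_eq]
        ring

lemma lossM_mul_conjTranspose_le {p : ℕ} (V : Matrix (Fin k) (Fin l) ℂ) (z : Fin l → ℂ)
    (Y : Matrix (Fin p) (Fin l) ℂ) (ha : enorm a = 1) :
    lossM (V * Yᴴ) (Y *ᵥ z) ≤ fnorm ((V - vecMulVec a (star z)) * Yᴴ) ^ 2 / p := by
  rw [Matrix.sub_mul, vecMulVec_mul, ← star_mulVec]
  exact lossM_le _ _ ha

lemma fnorm_mul_conjTranspose_vecMulVec_add_smul_le (D : Matrix (Fin k) (Fin l) ℂ)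
    (x : Fin l → ℂ) (σ : ℝ) (W : Matrix (Fin l) (Fin l) ℂ) :
    fnorm (D * (vecMulVec x (star x) + (σ : ℂ) • W)ᴴ) ≤
      enorm (D *ᵥ x) * enorm x + |σ| * (opNorm W * fnorm D) := by
  rw [conjTranspose_add, conjTranspose_smul, conjTranspose_vecMulVec, star_star, Matrix.mul_add,
    mul_vecMulVec, Matrix.mul_smul]
  refine (fnorm_add_le _ _).trans ?_
  rw [fnorm_vecMulVec, enorm_star, fnorm_smul, norm_star, Complex.norm_real, Real.norm_eq_abs]
  gcongr
  exact fnorm_mul_conjTranspose_le_opNorm W D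

lemma lossM_mul_conjTranspose_vecMulVec_add_smul_le [NeZero k] [NeZero l]
    (hVz : fnorm V = enorm z) (x : Fin l → ℂ) (σ : ℝ) (W Y : Matrix (Fin l) (Fin l) ℂ)
    (hY : Y = vecMulVec x (star x) + (σ : ℂ) • W) :
    lossM (V * Yᴴ) (Y *ᵥ z) ≤
      (√l * (√(lossM V z) / 2 + √(loss1 z x)) * enorm x + |σ| * opNorm W) ^ 2 * lossM V z := by
  obtain ⟨a, ha⟩ := exists_isDirection (V *ᵥ z)
  have loss_le := lossM_mul_conjTranspose_le V z Y ha.1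
  have loss_eq := ha.lossM_eq
  have mulVec_le := ha.enorm_sub_mulVec_le hVz x
  set D := V - vecMulVec a (star z)
  set r := √l * (√(lossM V z) / 2 + √(loss1 z x))
  have fnorm_mul_le : fnorm (D * Yᴴ) ≤ (r * enorm x + |σ| * opNorm W) * fnorm D := calc
    fnorm (D * Yᴴ) ≤ enorm (D *ᵥ x) * enorm x + |σ| * (opNorm W * fnorm D) :=
      hY ▸ fnorm_mul_conjTranspose_vecMulVec_add_smul_le D x σ W
    _ ≤ fnorm D * r * enorm x + |σ| * (opNorm W * fnorm D) := by
      have := enorm_nonneg x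
      gcongr
    _ = (r * enorm x + |σ| * opNorm W) * fnorm D := by ring
  calc lossM (V * Yᴴ) (Y *ᵥ z)
      ≤ fnorm (D * Yᴴ) ^ 2 / l := loss_le
    _ ≤ ((r * enorm x + |σ| * opNorm W) * fnorm D) ^ 2 / l := by
      have := fnorm_nonneg (D * Yᴴ)
      gcongr
    _ = (r * enorm x + |σ| * opNorm W) ^ 2 * (fnorm D ^ 2 / l) := by ring
    _ = (r * enorm x + |σ| * opNorm W) ^ 2 * lossM V z := by rw [loss_eq]

end Contraction

theorem stmt5_general {n m : ℕ} (hn : 1 ≤ n)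
    (zstar : Fin n → ℂ) (hzstar : enorm zstar = √n)
    (σ : ℝ) (W : Matrix (Fin n) (Fin n) ℂ)
    (Y : Matrix (Fin n) (Fin n) ℂ)
    (hY : Y = vecMulVec zstar (star zstar) + (σ : ℂ) • W)
    (ε : ℝ) (hε : 0 ≤ ε)
    (z : Fin n → ℂ) (hz1 : enorm z = √n) (hz2 : loss1 z zstar ≤ ε ^ 2)
    (V : Matrix (Fin m) (Fin n) ℂ) (hV1 : fnorm V = √n) (hV2 : lossM V zstar ≤ ε ^ 2) :
    lossM (V * Yᴴ) (Y *ᵥ z) ≤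
      (n : ℝ) ^ 2 * (2 * ε + |σ| * opNorm W / n) ^ 2 * lossM V z := by
  have : NeZero n := ⟨by lia⟩
  have : NeZero m := ⟨by rintro rfl; simpa [fnorm, NeZero.ne n] using hV1.symm⟩
  have hn0 : (n : ℝ) ≠ 0 := NeZero.ne _
  have hz : √(loss1 z zstar) ≤ ε := (Real.sqrt_le_left hε).mpr hz2
  have hVstar : √(lossM V zstar) ≤ ε := (Real.sqrt_le_left hε).mpr hV2
  have hV : √(lossM V z) ≤ 2 * ε := by linarith [sqrt_lossM_le_add V z zstar]
  have hW := opNorm_nonneg W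
  have hloss := lossM_nonneg V z
  calc lossM (V * Yᴴ) (Y *ᵥ z)
      ≤ (√n * (√(lossM V z) / 2 + √(loss1 z zstar)) * √n + |σ| * opNorm W) ^ 2 * lossM V z := by
        simpa only [hzstar] using lossM_mul_conjTranspose_vecMulVec_add_smul_le
          (hV1.trans hz1.symm) zstar σ W Y hY
    _ ≤ (√n * (2 * ε) * √n + |σ| * opNorm W) ^ 2 * lossM V z := by
        gcongr
        linarith
    _ = n ^ 2 * (2 * ε + |σ| * opNorm W / n) ^ 2 * lossM V z := by
        rw [mul_right_comm, Real.mul_self_sqrt n.cast_nonneg]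
        field_simp

theorem stmt5 {n m : ℕ} (hn : 1 ≤ n) (hm : 2 ≤ m)
    (zstar : Fin n → ℂ) (hzstar : ∀ j, ‖zstar j‖ = 1)
    (σ : ℝ) (hσ : 0 < σ) (W : Matrix (Fin n) (Fin n) ℂ) (hW : W.IsHermitian)
    (Y : Matrix (Fin n) (Fin n) ℂ)
    (hY : Y = Matrix.vecMulVec zstar (star zstar) + (σ : ℂ) • W)
    (ε : ℝ) (hε : 0 < ε ∧ ε < 1 / 2)
    (z : Fin n → ℂ) (hz1 : ∀ j, ‖z j‖ = 1) (hz2 : loss1 z zstar ≤ ε ^ 2)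
    (V : Matrix (Fin m) (Fin n) ℂ) (hV1 : ∀ j, enorm (col V j) = 1)
    (hV2 : lossM V zstar ≤ ε ^ 2) :
    lossM (V * Yᴴ) (Y.mulVec z) ≤ (n : ℝ) ^ 2 * (6 * ε + σ * opNorm W / n) ^ 2 * lossM V z := by
  refine (stmt5_general hn zstar (enorm_eq_sqrt_of_norm_eq_one hzstar) σ W Y hY
    ε hε.1.le z (enorm_eq_sqrt_of_norm_eq_one hz1) hz2 V
    (fnorm_eq_sqrt_of_enorm_col_eq_one hV1) hV2).trans ?_
  have := opNorm_nonneg W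
  have := lossM_nonneg V z
  have := hε.1
  rw [abs_of_pos hσ]
  gcongr
  norm_num

end PhaseSync
end
end

section
/- Let m ∈ ℕ. For any vectors x, y, u, v ∈ ℂ^m such that ‖u‖ ≤ 1 and ‖v‖ ≤ 1, and for any real t > 0, one has ‖( x/‖x‖·1{x ≠ 0} + u·1{x = 0} ) − ( y/‖y‖·1{y ≠ 0} + v·1{y = 0} )‖ ≤ 2‖x − y‖/t + 2·1{‖y‖ < t}. -/
open scoped Classical
open Matrix

noncomputable section

namespace PhaseSync

/-! For `‖y‖ < t` the bound is trivial, since both normalized vectors lie in the unit ball. For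
`t ≤ ‖y‖`, write `a` and `b` for the normalizations of `x` and `y`, so that `x = ‖x‖ a` and
`y = ‖y‖ b` even at `0`. Then `‖y‖ (a - b) = (x - y) - (‖x‖ - ‖y‖) a`, and both terms on the right
have norm at most `‖x - y‖`. -/

theorem norm_mul_norm_sub_le {𝕜 E : Type*} [NormedField 𝕜] [SeminormedAddCommGroup E]
    [NormedSpace 𝕜 E] (r s : 𝕜) {a : E} (b : E) (ha : ‖a‖ ≤ 1) :
    ‖s‖ * ‖a - b‖ ≤ ‖r • a - s • b‖ + ‖r - s‖ :=
  calc ‖s‖ * ‖a - b‖ = ‖(r • a - s • b) - (r - s) • a‖ := by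
        rw [← norm_smul]
        congr 1
        module
    _ ≤ ‖r • a - s • b‖ + ‖r - s‖ * ‖a‖ := by
        rw [← norm_smul]
        exact norm_sub_le _ _
    _ ≤ ‖r • a - s • b‖ + ‖r - s‖ := by
        gcongr
        exact mul_le_of_le_one_right (norm_nonneg _) ha

section NormalizeOr

variable {E : Type*} [NormedAddCommGroup E] [NormedSpace ℝ E] {u v : E}

/-- The unit vector in the direction of `x`, with the fallback value `u` at `x = 0`, where
`NormedSpace.normalize` would return `0`. -/
def normalizeOr (x u : E) : E := if x ≠ 0 then NormedSpace.normalize x else u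

theorem norm_normalizeOr_le_one (x : E) (hu : ‖u‖ ≤ 1) : ‖normalizeOr x u‖ ≤ 1 := by
  unfold normalizeOr
  split_ifs with hx
  · exact (NormedSpace.norm_normalize hx).le
  · exact hu

theorem norm_smul_normalizeOr (x u : E) : ‖x‖ • normalizeOr x u = x := by
  by_cases hx : x = 0 <;> simp [normalizeOr, hx]

theorem norm_mul_norm_normalizeOr_sub_le (x y v : E) (hu : ‖u‖ ≤ 1) :
    ‖y‖ * ‖normalizeOr x u - normalizeOr y v‖ ≤ 2 * ‖x - y‖ := by
  have polar := norm_mul_norm_sub_le ‖x‖ ‖y‖ (normalizeOr y v) (norm_normalizeOr_le_one x hu)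
  rw [norm_smul_normalizeOr, norm_smul_normalizeOr, norm_norm, Real.norm_eq_abs] at polar
  linarith [abs_norm_sub_norm_le x y]

theorem stmt7_general (x y : E) (hu : ‖u‖ ≤ 1) (hv : ‖v‖ ≤ 1) {t : ℝ} (ht : 0 < t) :
    ‖normalizeOr x u - normalizeOr y v‖ ≤ 2 * ‖x - y‖ / t + 2 * ind (‖y‖ < t) := by
  rcases lt_or_ge ‖y‖ t with hy | hy
  · have unit_ball : ‖normalizeOr x u - normalizeOr y v‖ ≤ 1 + 1 :=
      norm_sub_le_of_le (norm_normalizeOr_le_one x hu) (norm_normalizeOr_le_one y hv)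
    have : 0 ≤ 2 * ‖x - y‖ / t := by positivity
    rw [ind, if_pos hy]
    linarith
  · rw [ind, if_neg hy.not_gt, mul_zero, add_zero, le_div_iff₀' ht]
    calc t * ‖normalizeOr x u - normalizeOr y v‖
        ≤ ‖y‖ * ‖normalizeOr x u - normalizeOr y v‖ := by gcongr
      _ ≤ 2 * ‖x - y‖ := norm_mul_norm_normalizeOr_sub_le x y v hu

end NormalizeOr

theorem enorm_eq_norm_toLp_s7 {k : ℕ} (v : Fin k → ℂ) : enorm v = ‖WithLp.toLp 2 v‖ :=
  (EuclideanSpace.norm_eq _).symm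

theorem normalizeOr_toLp {k : ℕ} (x u : Fin k → ℂ) :
    normalizeOr (WithLp.toLp 2 x) (WithLp.toLp 2 u) =
      WithLp.toLp 2 fun i => if x ≠ 0 then x i / (enorm x : ℂ) else u i := by
  ext i
  by_cases hx : x = 0 <;>
    simp [normalizeOr, NormedSpace.normalize, enorm_eq_norm_toLp_s7, hx, div_eq_inv_mul]

theorem stmt7 {m : ℕ} (x y u v : Fin m → ℂ) (hu : enorm u ≤ 1) (hv : enorm v ≤ 1)
    (t : ℝ) (ht : 0 < t) :
    enorm (fun i =>
      (if x ≠ 0 then x i / (enorm x : ℂ) else u i) -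
      (if y ≠ 0 then y i / (enorm y : ℂ) else v i)) ≤
      2 * enorm (fun i => x i - y i) / t + 2 * ind (enorm y < t) := by
  rw [enorm_eq_norm_toLp_s7] at hu hv
  simpa only [normalizeOr_toLp, ← WithLp.toLp_sub, ← enorm_eq_norm_toLp_s7] using!
    stmt7_general (WithLp.toLp 2 x) (WithLp.toLp 2 y) hu hv ht

end PhaseSync
end
end
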